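/- For every centrally symmetric convex body K ⊂ ℝ^{2n} (i.e. K = −K), one has c(K) ≤ π·(M*(K))². Moreover, equality holds if and only if K is a Euclidean ball centered at the origin. -/

import Mathlib

open MeasureTheory Real Set Filter intervalIntegral Metric
open scoped InnerProductSpace Topology Pointwise

noncomputable section

/-- The phase space `ℝ^{2n}`. -/
abbrev E (n : ℕ) := EuclideanSpace ℝ (Fin (2 * n))

/-- The standard complex structure `J` on `ℝ^{2n}`, given in coordinates
`(x₁,y₁,…,xₙ,yₙ)` by `J(x₁,y₁,…,xₙ,yₙ) = (−y₁,x₁,…,−yₙ,xₙ)`. -/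
def Jmap (n : ℕ) (v : E n) : E n := WithLp.toLp 2 fun i =>
  if _h : i.val % 2 = 0 then -v ⟨i.val + 1, by have := i.isLt; omega⟩
  else v ⟨i.val - 1, by have := i.isLt; omega⟩

/-- The support function `h_K(u) = sup_{x ∈ K} ⟨x, u⟩`. -/
def suppFn (n : ℕ) (K : Set (E n)) (u : E n) : ℝ :=
  sSup ((fun x => ⟪x, u⟫_ℝ) '' K)

/-- A convex body: a compact convex set with nonempty interior. -/
def IsConvexBody (n : ℕ) (K : Set (E n)) : Prop :=
  IsCompact K ∧ Convex ℝ K ∧ (interior K).Nonempty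

/-- Membership in the loop space `𝓔_p`: the pair `(z, dz)` represents an absolutely
continuous `2π`-periodic loop `z` with derivative `dz ∈ L^p([0,2π])`, mean zero and
normalized action `(1/2)∫₀^{2π} ⟨J z, ż⟩ = 1`. -/
def InE (n : ℕ) (p : ℝ) (z dz : ℝ → E n) : Prop :=
  Function.Periodic z (2 * π) ∧
  (∀ a b : ℝ, IntervalIntegrable dz volume a b) ∧
  (∀ t, z t = z 0 + ∫ s in (0:ℝ)..t, dz s) ∧
  MemLp dz (ENNReal.ofReal p) (volume.restrict (Set.Ioc (0:ℝ) (2 * π))) ∧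
  (∫ t in (0:ℝ)..(2 * π), z t) = 0 ∧
  (1 / 2) * ∫ t in (0:ℝ)..(2 * π), ⟪Jmap n (z t), dz t⟫_ℝ = 1

/-- The (Ekeland–Hofer–Zehnder) capacity of a convex body,
`c(S) = (π · inf_{z ∈ 𝓔₂} (1/2π) ∫₀^{2π} h_S(ż(t)) dt)²`. -/
def capacity (n : ℕ) (S : Set (E n)) : ℝ :=
  (π * sInf { r : ℝ | ∃ z dz : ℝ → E n, InE n 2 z dz ∧
      r = (1 / (2 * π)) * ∫ t in (0:ℝ)..(2 * π), suppFn n S (dz t) }) ^ 2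

/-- The action `𝒜(γ) = (1/2) ∫₀^{T₀} ⟨−Jγ̇(t), γ(t)⟩ dt` of a `T₀`-periodic curve. -/
def action (n : ℕ) (γ : ℝ → E n) (T₀ : ℝ) : ℝ :=
  (1 / 2) * ∫ t in (0:ℝ)..T₀, ⟪-Jmap n (deriv γ t), γ t⟫_ℝ

/-- A closed characteristic on `∂K`: a nonconstant `T₀`-periodic `C¹` curve lying on
`∂K` satisfying `γ̇ = d·J∇F(γ)` for some `d > 0`, where `F = ‖·‖_K²`. -/
def IsClosedCharacteristic (n : ℕ) (K : Set (E n)) (γ : ℝ → E n) (T₀ : ℝ) : Prop :=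
  0 < T₀ ∧ Function.Periodic γ T₀ ∧ ContDiff ℝ 1 γ ∧ (∃ s t, γ s ≠ γ t) ∧
  (∀ t, γ t ∈ frontier K) ∧
  ∃ d : ℝ, 0 < d ∧ ∀ t, deriv γ t = d • Jmap n (gradient (fun x => gauge K x ^ 2) (γ t))

/-- A capacity carrier of `K`: a closed characteristic on `∂K` of minimal action. -/
def IsCapacityCarrier (n : ℕ) (K : Set (E n)) (γ : ℝ → E n) (T₀ : ℝ) : Prop :=
  IsClosedCharacteristic n K γ T₀ ∧
  ∀ γ' T₀', IsClosedCharacteristic n K γ' T₀' → action n γ T₀ ≤ action n γ' T₀'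

/-- The minimal action of a closed characteristic on `∂K`. -/
def minAction (n : ℕ) (K : Set (E n)) : ℝ :=
  sInf { a : ℝ | ∃ γ T₀, IsClosedCharacteristic n K γ T₀ ∧ a = action n γ T₀ }

/-- `K` has smooth boundary: its gauge function is `C¹` away from the origin. -/
def HasSmoothBoundary (n : ℕ) (K : Set (E n)) : Prop :=
  ContDiffOn ℝ 1 (gauge K) {(0 : E n)}ᶜ

/-- The `p`-sum `K +ₚ T` of Firey: the convex body with support function
`(h_K^p + h_T^p)^{1/p}`. -/
def pSum (n : ℕ) (p : ℝ) (K T : Set (E n)) : Set (E n) :=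
  { x | ∀ u, ⟪x, u⟫_ℝ ≤ (suppFn n K u ^ p + suppFn n T u ^ p) ^ (1 / p) }

/-- The polar body `T° = {x : ⟨x,y⟩ ≤ 1 for all y ∈ T}`. -/
def polarBody (n : ℕ) (T : Set (E n)) : Set (E n) :=
  { x | ∀ y ∈ T, ⟪x, y⟫_ℝ ≤ 1 }

/-- The length `∫₀^{T₀} ‖γ̇(t)‖_B dt` of a curve measured with the gauge of `B`. -/
def lengthIn (n : ℕ) (B : Set (E n)) (γ : ℝ → E n) (T₀ : ℝ) : ℝ :=
  ∫ t in (0:ℝ)..T₀, gauge B (deriv γ t)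

/-- Critical point of the functional `I_p(z) = ∫₀^{2π} h_K^p(ż(t)) dt` on `𝓔_p`. -/
def IsCriticalPoint (n : ℕ) (p : ℝ) (K : Set (E n)) (z dz : ℝ → E n) : Prop :=
  ∀ ξ dξ : ℝ → E n,
    Function.Periodic ξ (2 * π) →
    (∀ a b : ℝ, IntervalIntegrable dξ volume a b) →
    (∀ t, ξ t = ξ 0 + ∫ s in (0:ℝ)..t, dξ s) →
    MemLp dξ (ENNReal.ofReal p) (volume.restrict (Set.Ioc (0:ℝ) (2 * π))) →
    (∫ t in (0:ℝ)..(2 * π), ξ t) = 0 →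
    (∫ t in (0:ℝ)..(2 * π), ⟪ξ t, Jmap n (dz t)⟫_ℝ) = 0 →
    (∫ t in (0:ℝ)..(2 * π), ⟪gradient (fun u => suppFn n K u ^ p) (dz t), dξ t⟫_ℝ) = 0

/-- The rotation-invariant probability measure on the unit sphere of `ℝ^{2n}`. -/
def sphereMeasure (n : ℕ) : Measure (sphere (0 : E n) 1) :=
  ((volume : Measure (E n)).toSphere Set.univ)⁻¹ • (volume : Measure (E n)).toSphere

/-- The mean width parameter `M*(K) = ∫_{S^{2n-1}} h_K dσ`. -/
def meanWidth (n : ℕ) (K : Set (E n)) : ℝ :=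
  ∫ x : sphere (0 : E n) 1, suppFn n K (x : E n) ∂(sphereMeasure n)

/-!
For a unit vector `v`, the circle with velocity `e^{tJ} v` has action `π`, so it is admissible after
rescaling. Hence `c(K) ≤ π m(v)²`, where `m(v)` is the mean of `h_K` over `t ↦ e^{tJ} v`. The
rotations `e^{tJ}` preserve the sphere measure, so averaging over `v` turns `m(v)` into `M*(K)`.

If equality holds, then `m = M*(K)` on the whole sphere and every circle is a minimizer. Multiply
the velocity by `1 + ε φ(t)` with `φ` orthogonal to `1`, `cos` and `sin`: the loop still closes up
and its action changes only at order `ε²`, so minimality forces `φ` to be orthogonal to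
`t ↦ h_K(e^{tJ} v)`. When `K = -K` the function `φ(t) = h_K(e^{tJ} v) - M*(K)` is `π`-periodic,
hence orthogonal to `cos` and `sin`; this choice gives `∫ φ² = 0`, and `h_K` is constant on the
sphere.

For a ball, `∫ h_K(ż)` is a multiple of the length of `z`, and the lower bound on the capacity is
the isoperimetric inequality `4π · action ≤ length²`: parametrize by (almost) arc length and apply
Wirtinger's inequality.
-/

theorem memLp_restrict_Ioc_of_continuousOn {F : Type*} [NormedAddCommGroup F] {u : ℝ → F} {a b : ℝ}
    (hu : ContinuousOn u (Icc a b)) (p : ENNReal) : MemLp u p (volume.restrict (Ioc a b)) := by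
  obtain ⟨C, hC⟩ := isCompact_Icc.exists_bound_of_continuousOn hu
  refine MemLp.of_bound ?_ C ((ae_restrict_mem measurableSet_Ioc).mono fun t ht =>
    hC t (Ioc_subset_Icc_self ht))
  exact (hu.mono Ioc_subset_Icc_self).aestronglyMeasurable measurableSet_Ioc

theorem integral_eq_zero_of_antiperiodic {F : Type*} [NormedAddCommGroup F] [NormedSpace ℝ F]
    {f : ℝ → F} {c : ℝ} (hf : Continuous f) (h : Function.Antiperiodic f c) :
    ∫ t in (0 : ℝ)..(2 * c), f t = 0 := by
  have h_half : ∫ t in c..(2 * c), f t = -∫ t in (0 : ℝ)..c, f t := by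
    rw [← intervalIntegral.integral_neg, two_mul]
    simpa [h _] using (integral_comp_add_right f c (a := 0) (b := c)).symm
  rw [← integral_add_adjacent_intervals (hf.intervalIntegrable 0 c) (hf.intervalIntegrable c _),
    h_half, add_neg_cancel]

section Wirtinger

variable {a b : ℝ} {f : ℝ → ℝ}

theorem integral_mul_ofReal_deriv_eq_sub {e e' : ℝ → ℂ} (he : ∀ t, HasDerivAt e (e' t) t)
    (he' : Continuous e') (hf : AbsolutelyContinuousOnInterval f a b) :
    ∫ t in a..b, e t * ((deriv f t : ℝ) : ℂ) =
      e b * f b - e a * f a - ∫ t in a..b, e' t * (f t : ℂ) := by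
  have hec : Continuous e := continuous_iff_continuousAt.2 fun t => (he t).continuousAt
  have hi : IntervalIntegrable (fun t => e t * ((deriv f t : ℝ) : ℂ)) volume a b :=
    IntervalIntegrable.continuousOn_mul
      ⟨hf.intervalIntegrable_deriv.1.ofReal, hf.intervalIntegrable_deriv.2.ofReal⟩ hec.continuousOn
  have hi' : IntervalIntegrable (fun t => e' t * (f t : ℂ)) volume a b :=
    (he'.continuousOn.mul (Complex.continuous_ofReal.comp_continuousOn
      hf.continuousOn)).intervalIntegrable
  have real_parts (L : ℂ →L[ℝ] ℝ) : L (∫ t in a..b, e t * ((deriv f t : ℝ) : ℂ)) =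
      L (e b * f b - e a * f a - ∫ t in a..b, e' t * (f t : ℂ)) := by
    have hmul (w : ℂ) (r : ℝ) : L (w * r) = L w * r := by
      rw [mul_comm, ← Complex.real_smul, map_smul, smul_eq_mul, mul_comm]
    have hL (t : ℝ) : HasDerivAt (fun s => L (e s)) (L (e' t)) t :=
      L.hasFDerivAt.comp_hasDerivAt t (he t)
    have hLd : deriv (fun s => L (e s)) = fun t => L (e' t) := funext fun t => (hL t).deriv
    have hLC : ContDiff ℝ 1 (fun s => L (e s)) :=
      contDiff_one_iff_deriv.2 ⟨fun t => (hL t).differentiableAt, hLd ▸ by fun_prop⟩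
    have h := hLC.contDiffOn.absolutelyContinuousOnInterval.integral_mul_deriv_eq_deriv_mul hf
    rw [hLd] at h
    simpa only [map_sub, ← L.intervalIntegral_comp_comm hi, ← L.intervalIntegral_comp_comm hi',
      hmul] using h
  exact Complex.ext (real_parts Complex.reCLM) (real_parts Complex.imCLM)

theorem fourierCoeffOn_ofReal_deriv (hab : a < b) (hf : AbsolutelyContinuousOnInterval f a b)
    (hfab : f b = f a) (k : ℤ) :
    fourierCoeffOn hab (fun t => ((deriv f t : ℝ) : ℂ)) k =
      2 * π * Complex.I * k / (b - a) * fourierCoeffOn hab (fun t => (f t : ℂ)) k := by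
  have hcont : Continuous fun t : ℝ => (fourier (-k) (t : AddCircle (b - a)) : ℂ) :=
    (fourier (-k)).continuous.comp (AddCircle.continuous_mk' _)
  have hper : (fourier (-k) (b : AddCircle (b - a)) : ℂ) =
      fourier (-k) (a : AddCircle (b - a)) := by
    rw [← AddCircle.coe_add_period (b - a) a, add_sub_cancel]
  have h := integral_mul_ofReal_deriv_eq_sub (hasDerivAt_fourier_neg (b - a) k) (by fun_prop) hf
  simp only [hper, hfab, sub_self, zero_sub, mul_assoc, intervalIntegral.integral_const_mul] at h
  simp only [fourierCoeffOn_eq_integral, smul_eq_mul, h, Complex.real_smul]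
  push_cast
  ring

theorem norm_sq_fourierCoeffOn_ofReal_le (hab : a < b) (hf : AbsolutelyContinuousOnInterval f a b)
    (hfab : f b = f a) (hf0 : ∫ t in a..b, f t = 0) (k : ℤ) :
    ‖fourierCoeffOn hab (fun t => (f t : ℂ)) k‖ ^ 2 ≤
      ((b - a) / (2 * π)) ^ 2 * ‖fourierCoeffOn hab (fun t => ((deriv f t : ℝ) : ℂ)) k‖ ^ 2 := by
  have hba : 0 < b - a := sub_pos.2 hab
  rcases eq_or_ne k 0 with rfl | hk
  · have : fourierCoeffOn hab (fun t => (f t : ℂ)) 0 = 0 := by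
      simp [fourierCoeffOn_eq_integral, intervalIntegral.integral_ofReal, hf0]
    rw [this, norm_zero, zero_pow two_ne_zero]
    positivity
  · have hnorm : ‖(2 * π * Complex.I * k / (b - a) : ℂ)‖ = 2 * π * |(k : ℝ)| / (b - a) := by
      simp [← Complex.ofReal_sub, abs_of_pos pi_pos, abs_of_pos hba]
    have hk1 : (1 : ℝ) ≤ |(k : ℝ)| := by exact_mod_cast Int.one_le_abs hk
    have hfactor : (b - a) / (2 * π) * (2 * π * |(k : ℝ)| / (b - a)) = |(k : ℝ)| := by
      field_simp
    rw [fourierCoeffOn_ofReal_deriv hab hf hfab, norm_mul, hnorm, ← mul_pow, ← mul_assoc, hfactor,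
      mul_pow]
    exact le_mul_of_one_le_left (sq_nonneg _) (one_le_pow₀ hk1)

theorem integral_sq_le_integral_deriv_sq (hab : a < b)
    (hf : AbsolutelyContinuousOnInterval f a b) (hfab : f b = f a) (hf0 : ∫ t in a..b, f t = 0)
    (hd : MemLp (deriv f) 2 (volume.restrict (Ioc a b))) :
    ∫ t in a..b, f t ^ 2 ≤ ((b - a) / (2 * π)) ^ 2 * ∫ t in a..b, deriv f t ^ 2 := by
  have hfL : MemLp f 2 (volume.restrict (Ioc a b)) :=
    memLp_restrict_Ioc_of_continuousOn (uIcc_of_le hab.le ▸ hf.continuousOn) 2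
  have h := hasSum_le (norm_sq_fourierCoeffOn_ofReal_le hab hf hfab hf0)
    (hasSum_sq_fourierCoeffOn hab hfL.ofReal)
    ((hasSum_sq_fourierCoeffOn hab hd.ofReal).mul_left _)
  simp only [smul_eq_mul, RCLike.norm_ofReal, Complex.norm_real, Real.norm_eq_abs, sq_abs] at h
  rw [mul_left_comm] at h
  exact le_of_mul_le_mul_left h (inv_pos.2 (sub_pos.2 hab))

end Wirtinger

section IsoperimetricL2

variable {V : Type*} [NormedAddCommGroup V] [InnerProductSpace ℝ V]

theorem integral_sq_primitive_le {a b : ℝ} (hab : a < b) {u : ℝ → ℝ} {c : ℝ}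
    (hu : MemLp u 2 (volume.restrict (Ioc a b))) (hu0 : ∫ t in a..b, u t = 0)
    (hc : ∫ t in a..b, (c + ∫ s in a..t, u s) = 0) :
    ∫ t in a..b, (c + ∫ s in a..t, u s) ^ 2 ≤
      ((b - a) / (2 * π)) ^ 2 * ∫ t in a..b, u t ^ 2 := by
  have hui : IntervalIntegrable u volume a b :=
    (intervalIntegrable_iff_integrableOn_Ioc_of_le hab.le).2 (hu.integrable one_le_two)
  have hAC : AbsolutelyContinuousOnInterval (fun t => c + ∫ s in a..t, u s) a b :=
    (LipschitzWith.const c).lipschitzOnWith.absolutelyContinuousOnInterval.add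
      (hui.absolutelyContinuousOnInterval_intervalIntegral left_mem_uIcc)
  have hd : deriv (fun t => c + ∫ s in a..t, u s) =ᵐ[volume.restrict (Ioc a b)] u := by
    filter_upwards [ae_restrict_of_ae hui.ae_hasDerivAt_integral, ae_restrict_mem measurableSet_Ioc]
      with t ht htab
    exact ((ht (uIcc_of_le hab.le ▸ Ioc_subset_Icc_self htab) a left_mem_uIcc).const_add c).deriv
  have hsq := integral_congr_ae (hd.fun_comp (· ^ 2))
  simp only [← integral_of_le hab.le] at hsq
  exact hsq ▸ integral_sq_le_integral_deriv_sq hab hAC (by simp [hu0]) hc (hu.ae_eq hd.symm)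

theorem integral_norm_sq_eq_sum_integral_inner_sq {ι α : Type*} [Fintype ι]
    {_ : MeasurableSpace α} {μ : Measure α} (e : OrthonormalBasis ι ℝ V) {f : α → V}
    (hf : MemLp f 2 μ) : ∫ x, ‖f x‖ ^ 2 ∂μ = ∑ i, ∫ x, ⟪e i, f x⟫_ℝ ^ 2 ∂μ := by
  rw [← integral_finsetSum _ fun i _ => (hf.const_inner (e i)).integrable_sq]
  simp only [← e.sum_sq_norm_inner_right, Real.norm_eq_abs, sq_abs]

theorem inner_intervalIntegral [CompleteSpace V] {a b : ℝ} {u : ℝ → V} (v : V)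
    (hu : IntervalIntegrable u volume a b) :
    ⟪v, ∫ t in a..b, u t⟫_ℝ = ∫ t in a..b, ⟪v, u t⟫_ℝ :=
  ((innerSL ℝ v).intervalIntegral_comp_comm hu).symm

theorem integral_norm_sq_primitive_le [FiniteDimensional ℝ V] {a b : ℝ} (hab : a < b)
    {u : ℝ → V} {c : V} (hu : MemLp u 2 (volume.restrict (Ioc a b))) (hu0 : ∫ t in a..b, u t = 0)
    (hc : ∫ t in a..b, (c + ∫ s in a..t, u s) = 0) :
    ∫ t in a..b, ‖c + ∫ s in a..t, u s‖ ^ 2 ≤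
      ((b - a) / (2 * π)) ^ 2 * ∫ t in a..b, ‖u t‖ ^ 2 := by
  have := FiniteDimensional.complete ℝ V
  have hui : IntervalIntegrable u volume a b :=
    (intervalIntegrable_iff_integrableOn_Ioc_of_le hab.le).2 (hu.integrable one_le_two)
  have hzc : ContinuousOn (fun t => c + ∫ s in a..t, u s) (uIcc a b) :=
    continuousOn_const.add (continuousOn_primitive_interval' hui left_mem_uIcc)
  let e := stdOrthonormalBasis ℝ V
  have hcoord (i) : EqOn (fun t => ⟪e i, c + ∫ s in a..t, u s⟫_ℝ)
      (fun t => ⟪e i, c⟫_ℝ + ∫ s in a..t, ⟪e i, u s⟫_ℝ) (uIcc a b) := fun t ht => by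
    have ht' : uIcc a t ⊆ uIcc a b := uIcc_subset_uIcc_left ht
    simp only [inner_add_right, inner_intervalIntegral _ (hui.mono_set ht')]
  have hsum := integral_norm_sq_eq_sum_integral_inner_sq e
    (memLp_restrict_Ioc_of_continuousOn (uIcc_of_le hab.le ▸ hzc) 2)
  simp only [← integral_of_le hab.le] at hsum
  have hsum' := integral_norm_sq_eq_sum_integral_inner_sq e hu
  simp only [← integral_of_le hab.le] at hsum'
  rw [hsum, hsum', Finset.mul_sum]
  refine Finset.sum_le_sum fun i _ => ?_
  rw [integral_congr fun t ht => congrArg (· ^ 2) (hcoord i ht)]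
  refine integral_sq_primitive_le hab (hu.const_inner _) ?_ ?_
  · rw [← inner_intervalIntegral _ hui, hu0, inner_zero_right]
  · rw [← integral_congr (hcoord i), ← inner_intervalIntegral _ hzc.intervalIntegrable, hc,
      inner_zero_right]

theorem integrable_inner_of_memLp_two {α : Type*} {_ : MeasurableSpace α} {μ : Measure α}
    {f g : α → V} (hf : MemLp f 2 μ) (hg : MemLp g 2 μ) :
    Integrable (fun x => ⟪f x, g x⟫_ℝ) μ :=
  (hf.norm.integrable_mul hg.norm).mono' (hf.1.inner hg.1)
    (.of_forall fun _ => norm_inner_le_norm _ _)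

theorem integral_inner_const_add [CompleteSpace V] {α : Type*} {_ : MeasurableSpace α}
    {μ : Measure α} [IsFiniteMeasure μ] (T : V →L[ℝ] V) (c : V) {w u : α → V} (hw : MemLp w 2 μ)
    (hu : MemLp u 2 μ) (hu0 : ∫ x, u x ∂μ = 0) :
    ∫ x, ⟪T (c + w x), u x⟫_ℝ ∂μ = ∫ x, ⟪T (w x), u x⟫_ℝ ∂μ := by
  have hTw : Integrable (fun x => ⟪T (w x), u x⟫_ℝ) μ :=
    integrable_inner_of_memLp_two (T.comp_memLp' hw) hu
  have hTc : ∫ x, ⟪T c, u x⟫_ℝ ∂μ = 0 := by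
    rw [integral_inner (hu.integrable one_le_two), hu0, inner_zero_right]
  simp only [map_add, inner_add_left]
  rw [MeasureTheory.integral_add (integrable_inner_of_memLp_two (memLp_const _) hu) hTw, hTc,
    zero_add]

theorem integral_inner_le_of_integral_norm_sq_le {α : Type*} {_ : MeasurableSpace α} {μ : Measure α}
    (T : V →L[ℝ] V) {w u : α → V} {l : ℝ} (hl : 0 < l) (hw : MemLp w 2 μ) (hu : MemLp u 2 μ)
    (hwu : ∫ x, ‖w x‖ ^ 2 ∂μ ≤ l ^ 2 * ∫ x, ‖u x‖ ^ 2 ∂μ) :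
    ∫ x, ⟪T (w x), u x⟫_ℝ ∂μ ≤ ‖T‖ * l * ∫ x, ‖u x‖ ^ 2 ∂μ := by
  have pointwise (x) : ⟪T (w x), u x⟫_ℝ ≤ ‖T‖ / 2 * (l⁻¹ * ‖w x‖ ^ 2 + l * ‖u x‖ ^ 2) := by
    have amgm : 0 ≤ l⁻¹ * (‖w x‖ - l * ‖u x‖) ^ 2 := by positivity
    have expand : l⁻¹ * (‖w x‖ - l * ‖u x‖) ^ 2 =
        l⁻¹ * ‖w x‖ ^ 2 + l * ‖u x‖ ^ 2 - 2 * (‖w x‖ * ‖u x‖) := by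
      field_simp
      ring
    calc ⟪T (w x), u x⟫_ℝ ≤ ‖T (w x)‖ * ‖u x‖ := real_inner_le_norm _ _
      _ ≤ ‖T‖ * ‖w x‖ * ‖u x‖ := by gcongr; exact T.le_opNorm _
      _ = ‖T‖ / 2 * (2 * (‖w x‖ * ‖u x‖)) := by ring
      _ ≤ ‖T‖ / 2 * (l⁻¹ * ‖w x‖ ^ 2 + l * ‖u x‖ ^ 2) := by gcongr; linarith
  have hw2 := hw.norm.integrable_sq.const_mul l⁻¹
  have hu2 := hu.norm.integrable_sq.const_mul l
  calc ∫ x, ⟪T (w x), u x⟫_ℝ ∂μ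
      ≤ ∫ x, ‖T‖ / 2 * (l⁻¹ * ‖w x‖ ^ 2 + l * ‖u x‖ ^ 2) ∂μ :=
        integral_mono (integrable_inner_of_memLp_two (T.comp_memLp' hw) hu)
          ((hw2.add hu2).const_mul _) pointwise
    _ = ‖T‖ / 2 * (l⁻¹ * ∫ x, ‖w x‖ ^ 2 ∂μ + l * ∫ x, ‖u x‖ ^ 2 ∂μ) := by
        simp only [MeasureTheory.integral_const_mul, MeasureTheory.integral_add hw2 hu2]
    _ ≤ ‖T‖ / 2 * (l⁻¹ * (l ^ 2 * ∫ x, ‖u x‖ ^ 2 ∂μ) + l * ∫ x, ‖u x‖ ^ 2 ∂μ) := by gcongr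
    _ = ‖T‖ * l * ∫ x, ‖u x‖ ^ 2 ∂μ := by field_simp; ring

theorem integral_inner_primitive_le_integral_norm_sq [FiniteDimensional ℝ V] {a b : ℝ}
    (hab : a < b) (T : V →L[ℝ] V) {u : ℝ → V} (hu : MemLp u 2 (volume.restrict (Ioc a b)))
    (hu0 : ∫ t in a..b, u t = 0) :
    ∫ t in a..b, ⟪T (∫ s in a..t, u s), u t⟫_ℝ ≤
      ‖T‖ * ((b - a) / (2 * π)) * ∫ t in a..b, ‖u t‖ ^ 2 := by
  have := FiniteDimensional.complete ℝ V
  have hba : 0 < b - a := sub_pos.2 hab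
  have hui : IntervalIntegrable u volume a b :=
    (intervalIntegrable_iff_integrableOn_Ioc_of_le hab.le).2 (hu.integrable one_le_two)
  have hU : ContinuousOn (fun t => ∫ s in a..t, u s) (uIcc a b) :=
    continuousOn_primitive_interval' hui left_mem_uIcc
  let c : V := -((b - a)⁻¹ • ∫ t in a..b, ∫ s in a..t, u s)
  have hc : ∫ t in a..b, (c + ∫ s in a..t, u s) = 0 := by
    rw [intervalIntegral.integral_add intervalIntegrable_const hU.intervalIntegrable,
      intervalIntegral.integral_const, smul_neg, smul_inv_smul₀ hba.ne', neg_add_cancel]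
  have hUL : MemLp (fun t => ∫ s in a..t, u s) 2 (volume.restrict (Ioc a b)) :=
    memLp_restrict_Ioc_of_continuousOn (uIcc_of_le hab.le ▸ hU) 2
  have hwirt := integral_norm_sq_primitive_le hab hu hu0 hc
  simp only [integral_of_le hab.le (μ := volume)] at hwirt hu0 ⊢
  rw [← integral_inner_const_add T c hUL hu hu0]
  exact integral_inner_le_of_integral_norm_sq_le T (by positivity) ((memLp_const c).add hUL) hu
    hwirt

end IsoperimetricL2

section Isoperimetric

variable {V : Type*} [NormedAddCommGroup V] [InnerProductSpace ℝ V] {ρ : ℝ → ℝ} {σ : ℝ ≃o ℝ}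
  {a b ε : ℝ}

theorem exists_orderIso_eq_primitive (hε : 0 < ε) (hρε : ∀ t, ε ≤ ρ t)
    (hρ : ∀ a b, IntervalIntegrable ρ volume a b) :
    ∃ σ : ℝ ≃o ℝ, ∀ t, σ t = ∫ s in (0 : ℝ)..t, ρ s := by
  let S : ℝ → ℝ := fun t => ∫ s in (0 : ℝ)..t, ρ s
  have growth {a b : ℝ} (hab : a ≤ b) : ε * (b - a) ≤ S b - S a := by
    calc ε * (b - a) = ∫ _ in a..b, ε := by simp [mul_comm]
      _ ≤ ∫ t in a..b, ρ t := integral_mono_on hab (by simp) (hρ _ _) fun t _ => hρε t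
      _ = S b - S a := (integral_interval_sub_left (hρ _ _) (hρ _ _)).symm
  have hmono : StrictMono S := fun a b hab => by
    linarith [growth hab.le, mul_pos hε (sub_pos.2 hab)]
  have S_zero : S 0 = 0 := integral_same
  have htop : Tendsto S atTop atTop := by
    refine tendsto_atTop_mono' _ ?_ (tendsto_id.const_mul_atTop hε)
    filter_upwards [eventually_ge_atTop 0] with t ht
    simpa [S_zero] using growth ht
  have hbot : Tendsto S atBot atBot := by
    refine tendsto_atBot_mono' _ ?_ (tendsto_id.const_mul_atBot hε)
    filter_upwards [eventually_le_atBot 0] with t ht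
    simpa [S_zero] using growth ht
  have hsurj : Function.Surjective S := (continuous_primitive hρ 0).surjective htop hbot
  exact ⟨hmono.orderIsoOfSurjective S hsurj, fun _ => rfl⟩

theorem aestronglyMeasurable_of_intervalIntegrable {F : Type*} [NormedAddCommGroup F] {f : ℝ → F}
    (hf : ∀ a b, IntervalIntegrable f volume a b) : AEStronglyMeasurable f volume := by
  have : LocallyIntegrable f volume := fun x =>
    ⟨Ioc (x - 1) (x + 1), Ioc_mem_nhds (by linarith) (by linarith), (hf _ _).1⟩
  exact this.aestronglyMeasurable

theorem measurePreserving_orderIso_withDensity (hρ0 : ∀ t, 0 ≤ ρ t)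
    (hρ : ∀ a b, IntervalIntegrable ρ volume a b) (hσ : ∀ t, σ t = ∫ s in (0 : ℝ)..t, ρ s) :
    MeasurePreserving σ (volume.withDensity fun t => ENNReal.ofReal (ρ t)) volume := by
  refine ⟨σ.continuous.measurable, (Real.measure_ext_Ioo_rat fun p q => ?_).symm⟩
  obtain ⟨a, ha⟩ := σ.surjective p
  obtain ⟨b, hb⟩ := σ.surjective q
  rw [Measure.map_apply σ.continuous.measurable measurableSet_Ioo, ← ha, ← hb, σ.preimage_Ioo,
    σ.symm_apply_apply, σ.symm_apply_apply, withDensity_apply _ measurableSet_Ioo, Real.volume_Ioo]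
  rcases le_total a b with hab | hba
  · rw [Measure.restrict_congr_set Ioo_ae_eq_Ioc, hσ, hσ,
      integral_interval_sub_left (hρ _ _) (hρ _ _), integral_of_le hab,
      ofReal_integral_eq_lintegral_ofReal (hρ a b).1 (.of_forall hρ0)]
  · rw [Ioo_eq_empty hba.not_gt, setLIntegral_empty,
      ENNReal.ofReal_of_nonpos (sub_nonpos.2 (σ.monotone hba))]

theorem integral_orderIso_eq_integral_smul_comp {F : Type*} [NormedAddCommGroup F]
    [NormedSpace ℝ F] (hρ0 : ∀ t, 0 ≤ ρ t) (hρ : ∀ a b, IntervalIntegrable ρ volume a b)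
    (hσ : ∀ t, σ t = ∫ s in (0 : ℝ)..t, ρ s) (g : ℝ → F) (a b : ℝ) :
    ∫ x in σ a..σ b, g x = ∫ t in a..b, ρ t • g (σ t) := by
  have hmeas := (aestronglyMeasurable_of_intervalIntegrable hρ).aemeasurable.ennreal_ofReal
  have of_le {a b : ℝ} (hab : a ≤ b) : ∫ x in σ a..σ b, g x = ∫ t in a..b, ρ t • g (σ t) := by
    rw [integral_of_le (σ.monotone hab), integral_of_le hab,
      ← (measurePreserving_orderIso_withDensity hρ0 hρ hσ).setIntegral_preimage_emb
        σ.toHomeomorph.measurableEmbedding, σ.preimage_Ioc, σ.symm_apply_apply, σ.symm_apply_apply,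
      restrict_withDensity measurableSet_Ioc,
      integral_withDensity_eq_integral_toReal_smul₀ hmeas.restrict (by simp)]
    simp only [ENNReal.toReal_ofReal (hρ0 _)]
  rcases le_total a b with hab | hba
  · exact of_le hab
  · rw [integral_symm, of_le hba, ← integral_symm]

theorem integral_norm_sq_le_sub {F : Type*} [NormedAddCommGroup F] {f : ℝ → F} (hab : a ≤ b)
    (hf : ∀ t, ‖f t‖ ≤ 1) : ∫ t in a..b, ‖f t‖ ^ 2 ≤ b - a := by
  have h := norm_integral_le_of_norm_le_const (a := a) (b := b) (f := fun t => ‖f t‖ ^ 2) (C := 1)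
    fun t _ => by simpa using hf t
  rw [one_mul, abs_of_nonneg (sub_nonneg.2 hab)] at h
  exact (Real.le_norm_self _).trans h

theorem integral_inner_primitive_le_sq_integral [FiniteDimensional ℝ V] (hab : a < b)
    (T : V →L[ℝ] V) {u : ℝ → V} (hu : ∀ a b, IntervalIntegrable u volume a b)
    (hu0 : ∫ t in a..b, u t = 0) (hε : 0 < ε) (hρε : ∀ t, ε ≤ ρ t)
    (hρ : ∀ a b, IntervalIntegrable ρ volume a b) (huρ : ∀ t, ‖u t‖ ≤ ρ t) :
    ∫ t in a..b, ⟪T (∫ s in a..t, u s), u t⟫_ℝ ≤ ‖T‖ * (∫ t in a..b, ρ t) ^ 2 / (2 * π) := by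
  -- In the time `σ t = ∫₀ᵗ ρ` the curve has speed at most `1`, so its energy is at most `∫ ρ`.
  obtain ⟨σ, hσ⟩ := exists_orderIso_eq_primitive hε hρε hρ
  have hρpos (t) : 0 < ρ t := hε.trans_le (hρε t)
  have hρ0 (t) : 0 ≤ ρ t := (hρpos t).le
  let w : ℝ → V := fun x => (ρ (σ.symm x))⁻¹ • u (σ.symm x)
  have hw_comp (t) : ρ t • w (σ t) = u t := by simp [w, (hρpos t).ne']
  have hw_norm (x) : ‖w x‖ ≤ 1 := by
    rw [norm_smul, norm_inv, Real.norm_of_nonneg (hρ0 _), inv_mul_le_one₀ (hρpos _)]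
    exact huρ _
  have hw_prim (t) : ∫ x in σ a..σ t, w x = ∫ s in a..t, u s := by
    simp only [integral_orderIso_eq_integral_smul_comp hρ0 hρ hσ, hw_comp]
  have hw_meas : AEStronglyMeasurable w volume := by
    rw [← (measurePreserving_orderIso_withDensity hρ0 hρ hσ).aestronglyMeasurable_comp_iff
      σ.toHomeomorph.measurableEmbedding]
    have h := (aestronglyMeasurable_of_intervalIntegrable hρ).inv₀.smul
      (aestronglyMeasurable_of_intervalIntegrable hu)
    simpa [w, Function.comp_def, Pi.smul_def'] using
      h.mono_ac (withDensity_absolutelyContinuous _ _)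
  have hw : MemLp w 2 (volume.restrict (Ioc (σ a) (σ b))) :=
    .of_bound hw_meas.restrict 1 (.of_forall hw_norm)
  have henergy : ∫ x in σ a..σ b, ‖w x‖ ^ 2 ≤ σ b - σ a :=
    integral_norm_sq_le_sub (σ.monotone hab.le) hw_norm
  have hiso := integral_inner_primitive_le_integral_norm_sq (σ.strictMono hab) T hw
    (by rw [hw_prim, hu0])
  have hlength : σ b - σ a = ∫ t in a..b, ρ t := by
    rw [hσ, hσ, integral_interval_sub_left (hρ _ _) (hρ _ _)]
  have haction : ∫ x in σ a..σ b, ⟪T (∫ y in σ a..x, w y), w x⟫_ℝ =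
      ∫ t in a..b, ⟪T (∫ s in a..t, u s), u t⟫_ℝ := by
    simp only [integral_orderIso_eq_integral_smul_comp hρ0 hρ hσ, smul_eq_mul, ← inner_smul_right,
      hw_comp]
  rw [← haction]
  calc _ ≤ ‖T‖ * ((σ b - σ a) / (2 * π)) * ∫ x in σ a..σ b, ‖w x‖ ^ 2 := hiso
    _ ≤ ‖T‖ * ((σ b - σ a) / (2 * π)) * (σ b - σ a) := by
      have := sub_pos.2 (σ.strictMono hab)
      gcongr
    _ = ‖T‖ * (∫ t in a..b, ρ t) ^ 2 / (2 * π) := by rw [← hlength]; ring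

theorem integral_inner_primitive_le_sq_integral_norm [FiniteDimensional ℝ V] (hab : a < b)
    (T : V →L[ℝ] V) {u : ℝ → V} (hu : ∀ a b, IntervalIntegrable u volume a b)
    (hu0 : ∫ t in a..b, u t = 0) :
    ∫ t in a..b, ⟪T (∫ s in a..t, u s), u t⟫_ℝ ≤ ‖T‖ * (∫ t in a..b, ‖u t‖) ^ 2 / (2 * π) := by
  have perturbed {ε : ℝ} (hε : 0 < ε) : ∫ t in a..b, ⟪T (∫ s in a..t, u s), u t⟫_ℝ ≤
      ‖T‖ * ((∫ t in a..b, ‖u t‖) + (b - a) * ε) ^ 2 / (2 * π) := by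
    have h := integral_inner_primitive_le_sq_integral hab T hu hu0 hε (ρ := fun t => ‖u t‖ + ε)
      (by simp) (fun a b => (hu a b).norm.add intervalIntegrable_const) (by simp [hε.le])
    rwa [intervalIntegral.integral_add (hu a b).norm intervalIntegrable_const,
      intervalIntegral.integral_const, smul_eq_mul] at h
  have hlim : Tendsto (fun ε => ‖T‖ * ((∫ t in a..b, ‖u t‖) + (b - a) * ε) ^ 2 / (2 * π)) (𝓝[>] 0)
      (𝓝 (‖T‖ * ((∫ t in a..b, ‖u t‖) + (b - a) * 0) ^ 2 / (2 * π))) :=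
    (Continuous.tendsto (by fun_prop) 0).mono_left nhdsWithin_le_nhds
  rw [mul_zero, add_zero] at hlim
  exact ge_of_tendsto hlim (eventually_mem_nhdsWithin.mono fun ε hε => perturbed hε)

end Isoperimetric

section ComplexStructure

variable {V : Type*} [NormedAddCommGroup V] [InnerProductSpace ℝ V]

/-- An orthogonal complex structure: a linear isometry `J` with `J² = -1`. -/
structure IsOrthogonalComplexStructure (J : V →L[ℝ] V) : Prop where
  apply_apply : ∀ v, J (J v) = -v
  norm_apply : ∀ v, ‖J v‖ = ‖v‖

/-- The operator `e^{tJ} = cos t + (sin t) J`, a rotation when `J` is an orthogonal complex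
structure. -/
def expRotation (J : V →L[ℝ] V) (t : ℝ) : V →L[ℝ] V :=
  cos t • ContinuousLinearMap.id ℝ V + sin t • J

variable {J : V →L[ℝ] V}

theorem expRotation_apply (J : V →L[ℝ] V) (t : ℝ) (v : V) :
    expRotation J t v = cos t • v + sin t • J v := rfl

theorem expRotation_zero_apply (J : V →L[ℝ] V) (v : V) : expRotation J 0 v = v := by
  simp [expRotation_apply]

theorem expRotation_add_pi (J : V →L[ℝ] V) (t : ℝ) (v : V) :
    expRotation J (t + π) v = -expRotation J t v := by
  simp only [expRotation_apply, cos_add_pi, sin_add_pi, neg_smul, neg_add]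

theorem expRotation_periodic (J : V →L[ℝ] V) (v : V) :
    Function.Periodic (fun t => expRotation J t v) (2 * π) := fun t => by
  simp only [two_mul, ← add_assoc, expRotation_add_pi, neg_neg]

theorem continuous_expRotation_apply (J : V →L[ℝ] V) (v : V) :
    Continuous fun t => expRotation J t v := by
  simp only [expRotation_apply]
  fun_prop

theorem integral_smul_expRotation [CompleteSpace V] {φ : ℝ → ℝ} (hφ : Continuous φ) (a b : ℝ)
    (v : V) :
    ∫ t in a..b, φ t • expRotation J t v =
      (∫ t in a..b, φ t * cos t) • v + (∫ t in a..b, φ t * sin t) • J v := by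
  simp only [expRotation_apply, smul_add, smul_smul]
  rw [intervalIntegral.integral_add (Continuous.intervalIntegrable (by fun_prop) _ _)
    (Continuous.intervalIntegrable (by fun_prop) _ _), intervalIntegral.integral_smul_const,
    intervalIntegral.integral_smul_const]

theorem integral_expRotation [CompleteSpace V] (t : ℝ) (v : V) :
    ∫ s in (0 : ℝ)..t, expRotation J s v = sin t • v + (1 - cos t) • J v := by
  simpa using integral_smul_expRotation (J := J) (φ := fun _ => 1) continuous_const 0 t v

theorem integral_one_add_smul_expRotation_eq_zero [CompleteSpace V] {φ : ℝ → ℝ} (hφ : Continuous φ)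
    (hφc : ∫ t in (0 : ℝ)..(2 * π), φ t * cos t = 0)
    (hφs : ∫ t in (0 : ℝ)..(2 * π), φ t * sin t = 0) (ε : ℝ) (v : V) :
    ∫ t in (0 : ℝ)..(2 * π), (1 + ε * φ t) • expRotation J t v = 0 := by
  have hrot := continuous_expRotation_apply J v
  simp only [add_smul, one_smul, mul_smul]
  rw [intervalIntegral.integral_add (hrot.intervalIntegrable _ _)
    (Continuous.intervalIntegrable (by fun_prop) _ _), intervalIntegral.integral_smul,
    integral_smul_expRotation hφ, hφc, hφs]
  simp [integral_expRotation]

namespace IsOrthogonalComplexStructure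

variable (hJ : IsOrthogonalComplexStructure J)
include hJ

theorem inner_apply_apply (v w : V) : ⟪J v, J w⟫_ℝ = ⟪v, w⟫_ℝ :=
  (⟨J.toLinearMap, hJ.norm_apply⟩ : V →ₗᵢ[ℝ] V).inner_map_map v w

theorem inner_apply_left (v w : V) : ⟪J v, w⟫_ℝ = -⟪v, J w⟫_ℝ := by
  rw [← hJ.inner_apply_apply (J v) w, hJ.apply_apply, inner_neg_left]

theorem inner_apply_self (v : V) : ⟪J v, v⟫_ℝ = 0 := by
  linarith [hJ.inner_apply_left v v, real_inner_comm v (J v)]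

theorem opNorm_le_one : ‖J‖ ≤ 1 :=
  J.opNorm_le_bound zero_le_one fun v => by rw [hJ.norm_apply, one_mul]

theorem inner_expRotation (t : ℝ) (v : V) : ⟪v, expRotation J t v⟫_ℝ = cos t * ‖v‖ ^ 2 := by
  rw [expRotation_apply, inner_add_right, inner_smul_right, inner_smul_right,
    real_inner_comm (J v), hJ.inner_apply_self, real_inner_self_eq_norm_sq, mul_zero, add_zero]

theorem expRotation_expRotation_neg (t : ℝ) (v : V) :
    expRotation J t (expRotation J (-t) v) = v := by
  simp only [expRotation_apply, cos_neg, sin_neg, map_add, map_smul, hJ.apply_apply]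
  match_scalars
  · linear_combination sin_sq_add_cos_sq t
  · ring

theorem norm_expRotation_apply (t : ℝ) (v : V) : ‖expRotation J t v‖ = ‖v‖ := by
  refine (sq_eq_sq₀ (norm_nonneg _) (norm_nonneg _)).1 ?_
  rw [expRotation_apply, norm_add_sq_real, inner_smul_left, inner_smul_right, real_inner_comm,
    hJ.inner_apply_self, norm_smul, norm_smul, hJ.norm_apply, mul_pow, mul_pow, norm_eq_abs,
    norm_eq_abs, sq_abs, sq_abs]
  linear_combination ‖v‖ ^ 2 * sin_sq_add_cos_sq t

/-- The rotation `e^{tJ}` as a linear isometric automorphism. -/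
def expRotationIsometry (t : ℝ) : V ≃ₗᵢ[ℝ] V where
  toLinearEquiv := LinearEquiv.ofLinearMap (expRotation J t) (expRotation J (-t))
    (LinearMap.ext (hJ.expRotation_expRotation_neg t))
    (LinearMap.ext fun v => by simpa using hJ.expRotation_expRotation_neg (-t) v)
  norm_map' := hJ.norm_expRotation_apply t

theorem apply_integral_expRotation [CompleteSpace V] (t : ℝ) (v : V) :
    J (∫ s in (0 : ℝ)..t, expRotation J s v) = expRotation J t v - v := by
  rw [integral_expRotation, map_add, map_smul, map_smul, hJ.apply_apply, expRotation_apply]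
  module

end IsOrthogonalComplexStructure

end ComplexStructure

section LoopAction

variable {V : Type*} [NormedAddCommGroup V] [InnerProductSpace ℝ V]

/-- The symplectic action `½ ∫₀^{2π} ⟪J z, ż⟫` of the curve `z` with velocity `ż = u` and
`z 0 = 0`. For a closed curve the action does not depend on the starting point. -/
def loopAction (J : V →L[ℝ] V) (u : ℝ → V) : ℝ :=
  (1 / 2) * ∫ t in (0 : ℝ)..(2 * π), ⟪J (∫ s in (0 : ℝ)..t, u s), u t⟫_ℝ

variable {J : V →L[ℝ] V} {u w : ℝ → V}

theorem loopAction_const_smul (J : V →L[ℝ] V) (c : ℝ) (u : ℝ → V) :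
    loopAction J (fun t => c • u t) = c ^ 2 * loopAction J u := by
  have h_integrand : ∀ t, ⟪J (∫ s in (0 : ℝ)..t, c • u s), c • u t⟫_ℝ =
      c ^ 2 * ⟪J (∫ s in (0 : ℝ)..t, u s), u t⟫_ℝ := fun t => by
    rw [intervalIntegral.integral_smul, map_smul, real_inner_smul_left, real_inner_smul_right]
    ring
  simp only [loopAction, h_integrand, intervalIntegral.integral_const_mul]
  ring

variable [CompleteSpace V]

namespace IsOrthogonalComplexStructure

variable (hJ : IsOrthogonalComplexStructure J)
include hJ

theorem integral_inner_primitive_symm (hu : Continuous u) (hw : Continuous w)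
    (hu0 : ∫ t in (0 : ℝ)..(2 * π), u t = 0) :
    ∫ t in (0 : ℝ)..(2 * π), ⟪J (∫ s in (0 : ℝ)..t, w s), u t⟫_ℝ =
      ∫ t in (0 : ℝ)..(2 * π), ⟪J (∫ s in (0 : ℝ)..t, u s), w t⟫_ℝ := by
  have := continuous_primitive (μ := volume) (fun _ _ => hu.intervalIntegrable _ _) 0
  have := continuous_primitive (μ := volume) (fun _ _ => hw.intervalIntegrable _ _) 0
  have h_deriv : ∀ t, HasDerivAt
      (fun t => ⟪J (∫ s in (0 : ℝ)..t, w s), ∫ s in (0 : ℝ)..t, u s⟫_ℝ)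
      (⟪J (∫ s in (0 : ℝ)..t, w s), u t⟫_ℝ + ⟪J (w t), ∫ s in (0 : ℝ)..t, u s⟫_ℝ) t := fun t =>
    (J.hasFDerivAt.comp_hasDerivAt t (hw.integral_hasStrictDerivAt 0 t).hasDerivAt).inner ℝ
      (hu.integral_hasStrictDerivAt 0 t).hasDerivAt
  have h_parts := integral_eq_sub_of_hasDerivAt (a := 0) (b := 2 * π) (fun t _ => h_deriv t)
    (Continuous.intervalIntegrable (by fun_prop) _ _)
  rw [hu0, integral_same, inner_zero_right, map_zero, inner_zero_left, sub_zero,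
    intervalIntegral.integral_add (Continuous.intervalIntegrable (by fun_prop) _ _)
      (Continuous.intervalIntegrable (by fun_prop) _ _)] at h_parts
  have h_skew : ∀ t, ⟪J (w t), ∫ s in (0 : ℝ)..t, u s⟫_ℝ =
      -⟪J (∫ s in (0 : ℝ)..t, u s), w t⟫_ℝ := fun t => by
    rw [hJ.inner_apply_left, real_inner_comm]
  simp only [h_skew, intervalIntegral.integral_neg] at h_parts
  linarith

theorem loopAction_add (hu : Continuous u) (hw : Continuous w)
    (hu0 : ∫ t in (0 : ℝ)..(2 * π), u t = 0) :
    loopAction J (fun t => u t + w t) = loopAction J u + loopAction J w +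
      ∫ t in (0 : ℝ)..(2 * π), ⟪J (∫ s in (0 : ℝ)..t, u s), w t⟫_ℝ := by
  have := continuous_primitive (μ := volume) (fun _ _ => hu.intervalIntegrable _ _) 0
  have := continuous_primitive (μ := volume) (fun _ _ => hw.intervalIntegrable _ _) 0
  have h_integrand : ∀ t, ⟪J (∫ s in (0 : ℝ)..t, u s + w s), u t + w t⟫_ℝ =
      (⟪J (∫ s in (0 : ℝ)..t, u s), u t⟫_ℝ + ⟪J (∫ s in (0 : ℝ)..t, w s), w t⟫_ℝ) +
      (⟪J (∫ s in (0 : ℝ)..t, u s), w t⟫_ℝ + ⟪J (∫ s in (0 : ℝ)..t, w s), u t⟫_ℝ) := fun t => by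
    rw [intervalIntegral.integral_add (hu.intervalIntegrable _ _) (hw.intervalIntegrable _ _),
      map_add, inner_add_left, inner_add_right, inner_add_right]
    ring
  simp only [loopAction, h_integrand]
  rw [intervalIntegral.integral_add, intervalIntegral.integral_add, intervalIntegral.integral_add,
    hJ.integral_inner_primitive_symm hu hw hu0]
  · ring
  all_goals exact Continuous.intervalIntegrable (by fun_prop) _ _

theorem inner_apply_integral_expRotation (v : V) (t : ℝ) :
    ⟪J (∫ s in (0 : ℝ)..t, expRotation J s v), expRotation J t v⟫_ℝ = (1 - cos t) * ‖v‖ ^ 2 := by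
  rw [hJ.apply_integral_expRotation, inner_sub_left, real_inner_self_eq_norm_sq,
    hJ.norm_expRotation_apply, hJ.inner_expRotation]
  ring

theorem loopAction_expRotation (v : V) :
    loopAction J (fun t => expRotation J t v) = π * ‖v‖ ^ 2 := by
  have h_int : ∫ t in (0 : ℝ)..(2 * π), (1 - cos t) = 2 * π := by
    rw [intervalIntegral.integral_sub intervalIntegrable_const
      (continuous_cos.intervalIntegrable _ _)]
    simp
  simp only [loopAction, hJ.inner_apply_integral_expRotation,
    intervalIntegral.integral_mul_const, h_int]
  ring

theorem loopAction_one_add_smul_expRotation {φ : ℝ → ℝ} (hφ : Continuous φ)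
    (hφ0 : ∫ t in (0 : ℝ)..(2 * π), φ t = 0) (hφc : ∫ t in (0 : ℝ)..(2 * π), φ t * cos t = 0)
    (ε : ℝ) (v : V) :
    loopAction J (fun t => (1 + ε * φ t) • expRotation J t v) =
      π * ‖v‖ ^ 2 + ε ^ 2 * loopAction J (fun t => φ t • expRotation J t v) := by
  have hrot := continuous_expRotation_apply J v
  have hclosed : ∫ t in (0 : ℝ)..(2 * π), expRotation J t v = 0 := by
    simp [integral_expRotation]
  have h_cross : ∀ t, ⟪J (∫ s in (0 : ℝ)..t, expRotation J s v), ε • φ t • expRotation J t v⟫_ℝ =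
      (ε * ‖v‖ ^ 2) * (φ t - φ t * cos t) := fun t => by
    rw [real_inner_smul_right, real_inner_smul_right, hJ.inner_apply_integral_expRotation]
    ring
  simp only [add_smul, one_smul, mul_smul]
  rw [hJ.loopAction_add hrot (by fun_prop) hclosed, hJ.loopAction_expRotation,
    loopAction_const_smul]
  simp only [h_cross]
  rw [intervalIntegral.integral_const_mul, intervalIntegral.integral_sub
    (hφ.intervalIntegrable _ _) (Continuous.intervalIntegrable (by fun_prop) _ _), hφ0, hφc]
  ring

end IsOrthogonalComplexStructure

end LoopAction

section StandardComplexStructure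

/-- The index of the coordinate paired with the `i`-th one in `(x₁, y₁, …, xₙ, yₙ)`. -/
def conjIndex (n : ℕ) (i : Fin (2 * n)) : Fin (2 * n) :=
  if _h : i.val % 2 = 0 then ⟨i.val + 1, by lia⟩ else ⟨i.val - 1, by lia⟩

theorem conjIndex_involutive (n : ℕ) : Function.Involutive (conjIndex n) := by
  intro i
  ext
  grind [conjIndex]

theorem Jmap_apply (n : ℕ) (v : E n) (i : Fin (2 * n)) :
    Jmap n v i = (if i.val % 2 = 0 then -1 else 1) * v (conjIndex n i) := by
  by_cases h : i.val % 2 = 0 <;> simp [Jmap, conjIndex, h]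

/-- The standard complex structure `Jmap` of `ℝ^{2n}` as a continuous linear map. -/
def standardJ (n : ℕ) : E n →L[ℝ] E n :=
  LinearMap.toContinuousLinearMap
    { toFun := Jmap n
      map_add' := fun v w => by ext i; simp only [Jmap_apply, PiLp.add_apply, mul_add]
      map_smul' := fun c v => by
        ext i
        simp only [Jmap_apply, PiLp.smul_apply, smul_eq_mul, RingHom.id_apply]
        ring }

theorem standardJ_apply (n : ℕ) (v : E n) : standardJ n v = Jmap n v := rfl

theorem isOrthogonalComplexStructure_standardJ (n : ℕ) :
    IsOrthogonalComplexStructure (standardJ n) where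
  apply_apply v := by
    ext i
    rw [standardJ_apply, standardJ_apply, Jmap_apply, Jmap_apply, conjIndex_involutive n i,
      PiLp.neg_apply]
    by_cases h : i.val % 2 = 0 <;> grind [conjIndex]
  norm_apply v := by
    simp only [EuclideanSpace.norm_eq, standardJ_apply, Jmap_apply]
    rw [← Equiv.sum_comp (conjIndex_involutive n).toPerm fun i => ‖v i‖ ^ 2]
    congr! 3 with i
    by_cases h : i.val % 2 = 0 <;> simp [h]

end StandardComplexStructure

section SupportFunction

variable {n : ℕ} {K L : Set (E n)}

theorem continuous_suppFn (hK : IsCompact K) : Continuous (suppFn n K) :=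
  hK.continuous_sSup (f := fun u x => ⟪x, u⟫_ℝ) (by fun_prop)

theorem inner_le_suppFn (hK : IsCompact K) {x : E n} (hx : x ∈ K) (u : E n) :
    ⟪x, u⟫_ℝ ≤ suppFn n K u :=
  le_csSup (hK.bddAbove_image (by fun_prop)) (mem_image_of_mem _ hx)

theorem suppFn_le (hne : K.Nonempty) {u : E n} {a : ℝ} (h : ∀ x ∈ K, ⟪x, u⟫_ℝ ≤ a) :
    suppFn n K u ≤ a :=
  csSup_le (hne.image _) (forall_mem_image.2 h)

theorem suppFn_smul_of_nonneg (K : Set (E n)) {c : ℝ} (hc : 0 ≤ c) (u : E n) :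
    suppFn n K (c • u) = c * suppFn n K u := by
  have h : (fun x => ⟪x, c • u⟫_ℝ) '' K = c • (fun x => ⟪x, u⟫_ℝ) '' K := by
    simp only [inner_smul_right, ← image_smul, image_image, smul_eq_mul]
  rw [suppFn, suppFn, h, Real.sSup_smul_of_nonneg hc, smul_eq_mul]

theorem suppFn_neg_of_eq_neg (hsym : K = -K) (u : E n) : suppFn n K (-u) = suppFn n K u := by
  conv_lhs => rw [hsym]
  simp only [suppFn, ← image_neg_eq_neg, image_image, inner_neg_neg]

theorem suppFn_eq_mul_norm {M : ℝ} (h : ∀ v : E n, ‖v‖ = 1 → suppFn n K v = M) (u : E n) :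
    suppFn n K u = M * ‖u‖ := by
  rcases eq_or_ne u 0 with rfl | hu
  · simpa using suppFn_smul_of_nonneg K le_rfl (0 : E n)
  · have hu' := norm_ne_zero_iff.2 hu
    conv_lhs => rw [← smul_inv_smul₀ hu' u]
    rw [suppFn_smul_of_nonneg K (norm_nonneg u), h _ (by simp [norm_smul, hu']), mul_comm]

theorem suppFn_closedBall {r : ℝ} (hr : 0 ≤ r) (u : E n) :
    suppFn n (closedBall 0 r) u = r * ‖u‖ := by
  refine le_antisymm (suppFn_le (nonempty_closedBall.2 hr) fun x hx => ?_) ?_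
  · exact (real_inner_le_norm x u).trans (by gcongr; simpa using hx)
  · have hmem : (r / ‖u‖) • u ∈ closedBall (0 : E n) r := by
      rw [mem_closedBall_zero_iff, norm_smul, norm_div, norm_norm, norm_of_nonneg hr,
        div_mul_eq_mul_div, mul_div_assoc]
      exact mul_le_of_le_one_right hr (div_self_le_one _)
    calc r * ‖u‖ = ⟪(r / ‖u‖) • u, u⟫_ℝ := by
          rw [real_inner_smul_left, real_inner_self_eq_norm_sq]
          field_simp
      _ ≤ suppFn n (closedBall 0 r) u := inner_le_suppFn (isCompact_closedBall 0 r) hmem u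

theorem mem_of_forall_inner_le_suppFn (hK : IsClosed K) (hconv : Convex ℝ K) (hne : K.Nonempty)
    {x : E n} (hx : ∀ u, ⟪x, u⟫_ℝ ≤ suppFn n K u) : x ∈ K := by
  by_contra hxK
  obtain ⟨f, c, hfK, hfx⟩ := geometric_hahn_banach_closed_point hconv hK hxK
  obtain ⟨u, rfl⟩ := (InnerProductSpace.toDual ℝ (E n)).surjective f
  simp only [InnerProductSpace.toDual_apply_apply, real_inner_comm _ u] at hfK hfx
  exact (hfx.trans_le ((hx u).trans (suppFn_le hne fun y hy => (hfK y hy).le))).false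

theorem subset_of_suppFn_le (hK : IsCompact K) (hL : IsClosed L) (hLconv : Convex ℝ L)
    (hLne : L.Nonempty) (h : ∀ u, suppFn n K u ≤ suppFn n L u) : K ⊆ L := fun _ hx =>
  mem_of_forall_inner_le_suppFn hL hLconv hLne fun u => (inner_le_suppFn hK hx u).trans (h u)

theorem eq_closedBall_of_suppFn_eq (hK : IsCompact K) (hconv : Convex ℝ K) (hne : K.Nonempty)
    {r : ℝ} (hr : 0 ≤ r) (h : ∀ u, suppFn n K u = r * ‖u‖) : K = closedBall 0 r := by
  have h_eq (u : E n) : suppFn n K u = suppFn n (closedBall 0 r) u := by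
    rw [h, suppFn_closedBall hr]
  exact Subset.antisymm
    (subset_of_suppFn_le hK isClosed_closedBall (convex_closedBall 0 r)
      (nonempty_closedBall.2 hr) fun u => (h_eq u).le)
    (subset_of_suppFn_le (isCompact_closedBall 0 r) hK.isClosed hconv hne fun u => (h_eq u).ge)

end SupportFunction

section SphereAverage

/-- The action of a linear isometric automorphism on the unit sphere. -/
def sphereHomeomorph {V : Type*} [NormedAddCommGroup V] [NormedSpace ℝ V] (R : V ≃ₗᵢ[ℝ] V) :
    sphere (0 : V) 1 ≃ₜ sphere (0 : V) 1 :=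
  R.toHomeomorph.subtype fun x => by simp

theorem measurePreserving_sphereHomeomorph {V : Type*} [NormedAddCommGroup V] [NormedSpace ℝ V]
    [MeasurableSpace V] [BorelSpace V] {R : V ≃ₗᵢ[ℝ] V} {μ : Measure V}
    (hR : MeasurePreserving R μ μ) :
    MeasurePreserving (sphereHomeomorph R) μ.toSphere μ.toSphere := by
  refine ⟨(sphereHomeomorph R).measurable, Measure.ext fun s hs => ?_⟩
  have h_cone : Ioo (0 : ℝ) 1 • ((↑) '' (sphereHomeomorph R ⁻¹' s) : Set V) =
      R ⁻¹' (Ioo (0 : ℝ) 1 • (↑) '' s) := by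
    ext x
    constructor
    · rintro ⟨a, ha, _, ⟨y, hy, rfl⟩, rfl⟩
      exact ⟨a, ha, _, ⟨_, hy, rfl⟩, (map_smul R a (y : V)).symm⟩
    · rintro ⟨a, ha, _, ⟨y, hy, rfl⟩, hx⟩
      obtain ⟨z, rfl⟩ := (sphereHomeomorph R).surjective y
      exact ⟨a, ha, _, ⟨z, hy, rfl⟩, R.injective ((map_smul R a (z : V)).trans hx)⟩
  rw [Measure.map_apply (sphereHomeomorph R).measurable hs, Measure.toSphere_apply' _ hs,
    Measure.toSphere_apply' _ ((sphereHomeomorph R).measurable hs), h_cone,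
    hR.measure_preimage_emb R.toHomeomorph.measurableEmbedding]

theorem measurePreserving_sphereHomeomorph_sphereMeasure {n : ℕ} (R : E n ≃ₗᵢ[ℝ] E n) :
    MeasurePreserving (sphereHomeomorph R) (sphereMeasure n) (sphereMeasure n) :=
  (measurePreserving_sphereHomeomorph R.measurePreserving).smul_measure _

instance isProbabilityMeasure_sphereMeasure (n : ℕ) [NeZero n] :
    IsProbabilityMeasure (sphereMeasure n) where
  measure_univ := ENNReal.inv_mul_cancel
    (Measure.measure_univ_ne_zero.2 (Measure.toSphere_ne_zero _)) (measure_ne_top _ _)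

instance isOpenPosMeasure_sphereMeasure (n : ℕ) : (sphereMeasure n).IsOpenPosMeasure :=
  Measure.isOpenPosMeasure_smul _ (ENNReal.inv_ne_zero.2 (measure_ne_top _ _))

theorem eq_of_forall_le_of_integral_eq {X : Type*} [TopologicalSpace X] [CompactSpace X]
    [MeasurableSpace X] [OpensMeasurableSpace X] {μ : Measure X} [IsProbabilityMeasure μ]
    [μ.IsOpenPosMeasure] {g : X → ℝ} {c : ℝ} (hg : Continuous g) (hc : ∀ x, c ≤ g x)
    (h : ∫ x, g x ∂μ = c) (x : X) : g x = c := by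
  have hgint : Integrable g μ :=
    hg.integrable_of_hasCompactSupport (HasCompactSupport.of_compactSpace g)
  have h_ae : (fun _ => c) =ᵐ[μ] g :=
    (integral_eq_iff_of_ae_le (integrable_const c) hgint (.of_forall hc)).1 (by simp [h])
  exact congrFun (((continuous_const.ae_eq_iff_eq μ hg).1 h_ae).symm) x

variable {V : Type*} [NormedAddCommGroup V] [InnerProductSpace ℝ V] {J : V →L[ℝ] V} {f : V → ℝ}

/-- The average of `f` over the circle `t ↦ e^{tJ} v`. -/
def circleMean (J : V →L[ℝ] V) (f : V → ℝ) (v : V) : ℝ :=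
  1 / (2 * π) * ∫ t in (0 : ℝ)..(2 * π), f (expRotation J t v)

theorem integral_comp_expRotation_eq (J : V →L[ℝ] V) (f : V → ℝ) (v : V) :
    ∫ t in (0 : ℝ)..(2 * π), f (expRotation J t v) = 2 * π * circleMean J f v := by
  rw [circleMean]
  field_simp

theorem continuous_uncurry_expRotation (J : V →L[ℝ] V) :
    Continuous fun p : V × ℝ => expRotation J p.2 p.1 := by
  simp only [expRotation_apply]
  fun_prop

theorem continuous_circleMean (hf : Continuous f) : Continuous (circleMean J f) :=
  continuous_const.mul <| intervalIntegral.continuous_parametric_intervalIntegral_of_continuous'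
    (f := fun v t => f (expRotation J t v)) (hf.comp (continuous_uncurry_expRotation J)) 0 (2 * π)

theorem integral_circleMean [FiniteDimensional ℝ V] [MeasurableSpace V] [BorelSpace V]
    (hJ : IsOrthogonalComplexStructure J) (hf : Continuous f) {μ : Measure (sphere (0 : V) 1)}
    [IsFiniteMeasure μ]
    (hμ : ∀ t, MeasurePreserving (sphereHomeomorph (hJ.expRotationIsometry t)) μ μ) :
    ∫ v : sphere (0 : V) 1, circleMean J f v ∂μ = ∫ v : sphere (0 : V) 1, f v ∂μ := by
  have h_rotate (t : ℝ) : ∫ v : sphere (0 : V) 1, f (expRotation J t v) ∂μ =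
      ∫ v : sphere (0 : V) 1, f v ∂μ :=
    (hμ t).integral_comp (sphereHomeomorph _).measurableEmbedding fun v => f v
  have hcont : Continuous fun p : sphere (0 : V) 1 × ℝ => f (expRotation J p.2 p.1) :=
    hf.comp <|
      (continuous_uncurry_expRotation J).comp
        (f := fun p : sphere (0 : V) 1 × ℝ => ((p.1 : V), p.2)) (by fun_prop)
  have hint : Integrable (fun p : sphere (0 : V) 1 × ℝ => f (expRotation J p.2 p.1))
      (μ.prod (volume.restrict (Ioc 0 (2 * π)))) := by
    obtain ⟨C, hC⟩ := (isCompact_sphere (0 : V) 1).exists_bound_of_continuousOn hf.continuousOn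
    refine Integrable.of_bound hcont.aestronglyMeasurable C (.of_forall fun p => ?_)
    exact hC _ (mem_sphere_zero_iff_norm.2
      ((hJ.norm_expRotation_apply p.2 p.1).trans (mem_sphere_zero_iff_norm.1 p.1.2)))
  simp only [circleMean, MeasureTheory.integral_const_mul, integral_of_le two_pi_pos.le]
  rw [integral_integral_swap hint]
  simp only [h_rotate, ← integral_of_le two_pi_pos.le, intervalIntegral.integral_const,
    smul_eq_mul, sub_zero]
  field_simp

end SphereAverage

section LoopSpace

variable {n : ℕ} {K : Set (E n)} {z u : ℝ → E n}

/-- The infimum of the mean support function `(1/2π) ∫₀^{2π} h_S(ż)` over the loops `z ∈ 𝓔₂`. -/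
def minLoopWidth (n : ℕ) (S : Set (E n)) : ℝ :=
  sInf { r : ℝ | ∃ z dz : ℝ → E n, InE n 2 z dz ∧
    r = (1 / (2 * π)) * ∫ t in (0 : ℝ)..(2 * π), suppFn n S (dz t) }

theorem capacity_eq_pi_mul_sq (n : ℕ) (S : Set (E n)) :
    capacity n S = π * (minLoopWidth n S * √π) ^ 2 := by
  rw [mul_pow, sq_sqrt pi_pos.le, capacity, minLoopWidth]
  ring

theorem integral_suppFn_nonneg (hK : IsCompact K) (hne : K.Nonempty) {a b : ℝ} (hab : a ≤ b)
    (hu : IntervalIntegrable u volume a b) (hu0 : ∫ t in a..b, u t = 0) :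
    0 ≤ ∫ t in a..b, suppFn n K (u t) := by
  obtain ⟨x, hx⟩ := hne
  by_cases hint : IntervalIntegrable (fun t => suppFn n K (u t)) volume a b
  · calc 0 = ∫ t in a..b, ⟪x, u t⟫_ℝ := by
          rw [← inner_intervalIntegral x hu, hu0, inner_zero_right]
      _ ≤ ∫ t in a..b, suppFn n K (u t) :=
        integral_mono_on hab
          ⟨(innerSL ℝ x).integrable_comp hu.1, (innerSL ℝ x).integrable_comp hu.2⟩ hint
          fun t _ => inner_le_suppFn hK hx (u t)
  · rw [intervalIntegral.integral_undef hint]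

namespace InE

theorem integral_velocity_eq_zero {p : ℝ} (h : InE n p z u) :
    ∫ t in (0 : ℝ)..(2 * π), u t = 0 := by
  obtain ⟨hper, -, hz, -⟩ := h
  simpa [hz (2 * π)] using hper 0

theorem memLp_velocity (h : InE n 2 z u) : MemLp u 2 (volume.restrict (Ioc 0 (2 * π))) := by
  simpa using h.2.2.2.1

end InE

theorem integral_inner_const_add_primitive (hu : MemLp u 2 (volume.restrict (Ioc 0 (2 * π))))
    (hu0 : ∫ t in (0 : ℝ)..(2 * π), u t = 0) (c : E n) :
    (1 / 2) * ∫ t in (0 : ℝ)..(2 * π), ⟪Jmap n (c + ∫ s in (0 : ℝ)..t, u s), u t⟫_ℝ =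
      loopAction (standardJ n) u := by
  have hw : MemLp (fun t => ∫ s in (0 : ℝ)..t, u s) 2 (volume.restrict (Ioc 0 (2 * π))) := by
    have hint : IntervalIntegrable u volume 0 (2 * π) :=
      (intervalIntegrable_iff_integrableOn_Ioc_of_le two_pi_pos.le).2 (hu.integrable one_le_two)
    refine memLp_restrict_Ioc_of_continuousOn ?_ 2
    rw [← uIcc_of_le two_pi_pos.le]
    exact continuousOn_primitive_interval' hint left_mem_uIcc
  rw [integral_of_le two_pi_pos.le] at hu0
  rw [loopAction]
  simp only [integral_of_le two_pi_pos.le, ← standardJ_apply]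
  rw [integral_inner_const_add (standardJ n) c hw hu hu0]

theorem InE.loopAction_eq_one (h : InE n 2 z u) : loopAction (standardJ n) u = 1 := by
  rw [← integral_inner_const_add_primitive h.memLp_velocity h.integral_velocity_eq_zero (z 0)]
  simpa only [← h.2.2.1] using h.2.2.2.2.2

theorem exists_inE_of_loopAction_eq_one (hu : Continuous u) (hper : Function.Periodic u (2 * π))
    (hu0 : ∫ t in (0 : ℝ)..(2 * π), u t = 0) (hact : loopAction (standardJ n) u = 1) :
    ∃ z, InE n 2 z u := by
  have hint (a b : ℝ) : IntervalIntegrable u volume a b := hu.intervalIntegrable a b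
  have hmem (p : ENNReal) : MemLp u p (volume.restrict (Ioc 0 (2 * π))) :=
    memLp_restrict_Ioc_of_continuousOn hu.continuousOn p
  have hU : Continuous fun t => ∫ s in (0 : ℝ)..t, u s := continuous_primitive hint 0
  set c : E n := -(1 / (2 * π)) • ∫ t in (0 : ℝ)..(2 * π), ∫ s in (0 : ℝ)..t, u s with hc
  refine ⟨fun t => c + ∫ s in (0 : ℝ)..t, u s, fun t => ?_, hint, fun t => ?_, hmem _, ?_, ?_⟩
  · beta_reduce
    rw [← integral_add_adjacent_intervals (hint 0 t) (hint t _),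
      hper.intervalIntegral_add_eq t 0, zero_add, hu0, add_zero]
  · beta_reduce
    rw [integral_same, add_zero]
  · rw [intervalIntegral.integral_add intervalIntegrable_const (hU.intervalIntegrable _ _),
      intervalIntegral.integral_const, hc, smul_smul, sub_zero, mul_neg,
      mul_one_div_cancel two_pi_pos.ne', neg_one_smul, neg_add_cancel]
  · rw [integral_inner_const_add_primitive (hmem 2) hu0, hact]

theorem nonneg_of_mem_loopWidths (hK : IsCompact K) (hne : K.Nonempty) (h : InE n 2 z u) :
    0 ≤ (1 / (2 * π)) * ∫ t in (0 : ℝ)..(2 * π), suppFn n K (u t) :=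
  mul_nonneg (by positivity)
    (integral_suppFn_nonneg hK hne two_pi_pos.le (h.2.1 _ _) h.integral_velocity_eq_zero)

theorem minLoopWidth_nonneg (hK : IsCompact K) (hne : K.Nonempty) : 0 ≤ minLoopWidth n K := by
  refine Real.sInf_nonneg ?_
  rintro _ ⟨z, u, h, rfl⟩
  exact nonneg_of_mem_loopWidths hK hne h

theorem minLoopWidth_le (hK : IsCompact K) (hne : K.Nonempty) (h : InE n 2 z u) :
    minLoopWidth n K ≤ (1 / (2 * π)) * ∫ t in (0 : ℝ)..(2 * π), suppFn n K (u t) := by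
  refine csInf_le ⟨0, ?_⟩ ⟨z, u, h, rfl⟩
  rintro _ ⟨z, u, h, rfl⟩
  exact nonneg_of_mem_loopWidths hK hne h

theorem minLoopWidth_mul_sqrt_loopAction_le (hK : IsCompact K) (hne : K.Nonempty)
    (hu : Continuous u) (hper : Function.Periodic u (2 * π))
    (hu0 : ∫ t in (0 : ℝ)..(2 * π), u t = 0) :
    minLoopWidth n K * √(loopAction (standardJ n) u) ≤
      (1 / (2 * π)) * ∫ t in (0 : ℝ)..(2 * π), suppFn n K (u t) := by
  rcases le_or_gt (loopAction (standardJ n) u) 0 with ha | ha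
  · rw [sqrt_eq_zero_of_nonpos ha, mul_zero]
    exact mul_nonneg (by positivity)
      (integral_suppFn_nonneg hK hne two_pi_pos.le (hu.intervalIntegrable _ _) hu0)
  set r := √(loopAction (standardJ n) u) with hr
  have hr0 : 0 < r := sqrt_pos.2 ha
  obtain ⟨z, hz⟩ := exists_inE_of_loopAction_eq_one (u := fun t => r⁻¹ • u t) (by fun_prop)
    (hper.comp (r⁻¹ • ·)) (by rw [intervalIntegral.integral_smul, hu0, smul_zero]) (by
      rw [loopAction_const_smul, inv_pow, hr, sq_sqrt ha.le, inv_mul_cancel₀ ha.ne'])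
  have h := minLoopWidth_le hK hne hz
  simp only [suppFn_smul_of_nonneg K (inv_pos.2 hr0).le, intervalIntegral.integral_const_mul] at h
  rw [mul_left_comm, inv_mul_eq_div] at h
  exact (le_div_iff₀ hr0).1 h

end LoopSpace

section CircleBound

variable {n : ℕ} {K : Set (E n)} {v : E n}

theorem minLoopWidth_mul_sqrt_pi_le_circleMean (hK : IsCompact K) (hne : K.Nonempty)
    (hv : ‖v‖ = 1) : minLoopWidth n K * √π ≤ circleMean (standardJ n) (suppFn n K) v := by
  have hJ := isOrthogonalComplexStructure_standardJ n
  have h := minLoopWidth_mul_sqrt_loopAction_le hK hne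
    (continuous_expRotation_apply (standardJ n) v) (expRotation_periodic _ v)
    (by simp [integral_expRotation])
  rwa [hJ.loopAction_expRotation, hv, one_pow, mul_one] at h

theorem integral_circleMean_suppFn [NeZero n] (hK : IsCompact K) :
    ∫ v : sphere (0 : E n) 1, circleMean (standardJ n) (suppFn n K) v ∂sphereMeasure n =
      meanWidth n K :=
  integral_circleMean (isOrthogonalComplexStructure_standardJ n) (continuous_suppFn hK) fun _ =>
    measurePreserving_sphereHomeomorph_sphereMeasure _

theorem minLoopWidth_zero (K : Set (E 0)) : minLoopWidth 0 K = 0 := by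
  have : IsEmpty (Fin (2 * 0)) := Fin.isEmpty
  refine (congrArg sInf (eq_empty_iff_forall_notMem.2 ?_)).trans Real.sInf_empty
  rintro _ ⟨z, u, h, -⟩
  have := h.loopAction_eq_one
  simp [loopAction, Subsingleton.elim (u _) 0] at this

theorem meanWidth_zero (K : Set (E 0)) : meanWidth 0 K = 0 := by
  have : IsEmpty (Fin (2 * 0)) := Fin.isEmpty
  have : IsEmpty (sphere (0 : E 0) 1) := ⟨fun x => by
    simpa [Subsingleton.elim (x : E 0) 0] using mem_sphere_zero_iff_norm.1 x.2⟩
  exact integral_of_isEmpty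

theorem minLoopWidth_mul_sqrt_pi_le_meanWidth (hK : IsCompact K) (hne : K.Nonempty) :
    minLoopWidth n K * √π ≤ meanWidth n K := by
  rcases eq_zero_or_neZero n with rfl | _
  · rw [minLoopWidth_zero, meanWidth_zero, zero_mul]
  have hcont : Continuous fun v : sphere (0 : E n) 1 =>
      circleMean (standardJ n) (suppFn n K) v :=
    (continuous_circleMean (continuous_suppFn hK)).comp continuous_subtype_val
  calc minLoopWidth n K * √π
      = ∫ _ : sphere (0 : E n) 1, minLoopWidth n K * √π ∂sphereMeasure n := by simp
    _ ≤ ∫ v : sphere (0 : E n) 1, circleMean (standardJ n) (suppFn n K) v ∂sphereMeasure n :=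
        integral_mono (integrable_const _)
          (hcont.integrable_of_hasCompactSupport (HasCompactSupport.of_compactSpace _)) fun v =>
          minLoopWidth_mul_sqrt_pi_le_circleMean hK hne (mem_sphere_zero_iff_norm.1 v.2)
    _ = meanWidth n K := integral_circleMean_suppFn hK

theorem circleMean_eq_meanWidth [NeZero n] (hK : IsCompact K) (hne : K.Nonempty)
    (h : minLoopWidth n K * √π = meanWidth n K) (hv : ‖v‖ = 1) :
    circleMean (standardJ n) (suppFn n K) v = meanWidth n K :=
  eq_of_forall_le_of_integral_eq (μ := sphereMeasure n)
    (g := fun w : sphere (0 : E n) 1 => circleMean (standardJ n) (suppFn n K) w)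
    ((continuous_circleMean (continuous_suppFn hK)).comp continuous_subtype_val)
    (fun w => h ▸ minLoopWidth_mul_sqrt_pi_le_circleMean hK hne (mem_sphere_zero_iff_norm.1 w.2))
    (integral_circleMean_suppFn hK) ⟨v, mem_sphere_zero_iff_norm.2 hv⟩

end CircleBound

section EqualityCase

variable {n : ℕ} {K : Set (E n)} {v : E n} {φ : ℝ → ℝ}

theorem minLoopWidth_mul_sqrt_le_of_perturbation (hK : IsCompact K) (hne : K.Nonempty)
    (hv : ‖v‖ = 1) (hφ : Continuous φ) (hper : Function.Periodic φ (2 * π))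
    (hφ0 : ∫ t in (0 : ℝ)..(2 * π), φ t = 0)
    (hφc : ∫ t in (0 : ℝ)..(2 * π), φ t * cos t = 0)
    (hφs : ∫ t in (0 : ℝ)..(2 * π), φ t * sin t = 0) {ε : ℝ} (hε : ∀ t, 0 ≤ 1 + ε * φ t) :
    minLoopWidth n K *
        √(π + ε ^ 2 * loopAction (standardJ n) (fun t => φ t • expRotation (standardJ n) t v)) ≤
      circleMean (standardJ n) (suppFn n K) v + ε * (1 / (2 * π) *
        ∫ t in (0 : ℝ)..(2 * π), φ t * suppFn n K (expRotation (standardJ n) t v)) := by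
  have hJ := isOrthogonalComplexStructure_standardJ n
  have hrot := continuous_expRotation_apply (standardJ n) v
  have hg : Continuous fun t => suppFn n K (expRotation (standardJ n) t v) :=
    (continuous_suppFn hK).comp hrot
  have h := minLoopWidth_mul_sqrt_loopAction_le hK hne
    (u := fun t => (1 + ε * φ t) • expRotation (standardJ n) t v) (by fun_prop)
    (fun t => by simp only [hper t, (expRotation_periodic (standardJ n) v) t])
    (integral_one_add_smul_expRotation_eq_zero hφ hφc hφs ε v)
  rw [hJ.loopAction_one_add_smul_expRotation hφ hφ0 hφc, hv, one_pow, mul_one] at h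
  refine h.trans_eq ?_
  simp only [suppFn_smul_of_nonneg K (hε _), add_mul, one_mul, mul_assoc]
  rw [intervalIntegral.integral_add (hg.intervalIntegrable _ _)
    (Continuous.intervalIntegrable (by fun_prop) _ _), intervalIntegral.integral_const_mul,
    circleMean]
  ring

theorem integral_mul_suppFn_expRotation_eq_zero (hK : IsCompact K) (hne : K.Nonempty) (hv : ‖v‖ = 1)
    (h : minLoopWidth n K * √π = circleMean (standardJ n) (suppFn n K) v) (hφ : Continuous φ)
    (hper : Function.Periodic φ (2 * π)) (hφ0 : ∫ t in (0 : ℝ)..(2 * π), φ t = 0)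
    (hφc : ∫ t in (0 : ℝ)..(2 * π), φ t * cos t = 0)
    (hφs : ∫ t in (0 : ℝ)..(2 * π), φ t * sin t = 0) :
    ∫ t in (0 : ℝ)..(2 * π), φ t * suppFn n K (expRotation (standardJ n) t v) = 0 := by
  set I := 1 / (2 * π) *
    ∫ t in (0 : ℝ)..(2 * π), φ t * suppFn n K (expRotation (standardJ n) t v)
  set A := loopAction (standardJ n) fun t => φ t • expRotation (standardJ n) t v
  let F : ℝ → ℝ := fun ε => minLoopWidth n K * √π + ε * I - minLoopWidth n K * √(π + ε ^ 2 * A)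
  have hF : HasDerivAt F I 0 := by
    have hin : HasDerivAt (fun ε : ℝ => π + ε ^ 2 * A) 0 0 := by
      simpa using (((hasDerivAt_id (0 : ℝ)).pow 2).mul_const A).const_add π
    have hlin := ((hasDerivAt_id (0 : ℝ)).mul_const I).const_add (minLoopWidth n K * √π)
    simpa using hlin.fun_sub ((hin.sqrt (by simp [pi_ne_zero])).const_mul (minLoopWidth n K))
  obtain ⟨C, hC⟩ := (hper.isBounded_of_continuous two_pi_pos.ne' hφ).exists_norm_le
  have h_near : ∀ᶠ ε in 𝓝 (0 : ℝ), |ε| * C < 1 :=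
    (Continuous.tendsto' (by fun_prop) 0 0 (by simp)).eventually_lt_const one_pos
  have hmin : IsLocalMin F 0 := by
    filter_upwards [h_near] with ε hε
    have h_nonneg (t : ℝ) : 0 ≤ 1 + ε * φ t := by
      have : |ε * φ t| ≤ |ε| * C := by
        rw [abs_mul]
        exact mul_le_mul_of_nonneg_left (hC _ (mem_range_self t)) (abs_nonneg ε)
      linarith [neg_abs_le (ε * φ t)]
    have hle := minLoopWidth_mul_sqrt_le_of_perturbation hK hne hv hφ hper hφ0 hφc hφs h_nonneg
    have hF0 : F 0 = 0 := by simp [F]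
    rw [hF0]
    exact sub_nonneg.2 (h ▸ hle)
  exact (mul_eq_zero.1 (hmin.hasDerivAt_eq_zero hF)).resolve_left (by positivity)

theorem suppFn_eq_circleMean (hK : IsCompact K) (hne : K.Nonempty) (hsym : K = -K) (hv : ‖v‖ = 1)
    (h : minLoopWidth n K * √π = circleMean (standardJ n) (suppFn n K) v) :
    suppFn n K v = circleMean (standardJ n) (suppFn n K) v := by
  set M := circleMean (standardJ n) (suppFn n K) v with hM
  let g : ℝ → ℝ := fun t => suppFn n K (expRotation (standardJ n) t v)
  have hg : Continuous g := (continuous_suppFn hK).comp (continuous_expRotation_apply _ v)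
  have hper : Function.Periodic g π := fun t => by
    simp only [g, expRotation_add_pi, suppFn_neg_of_eq_neg hsym]
  have h_mean : ∫ t in (0 : ℝ)..(2 * π), (g t - M) = 0 := by
    rw [intervalIntegral.integral_sub (hg.intervalIntegrable _ _) intervalIntegrable_const,
      integral_comp_expRotation_eq, ← hM]
    simp
  have h_orth : ∫ t in (0 : ℝ)..(2 * π), (g t - M) * g t = 0 :=
    integral_mul_suppFn_expRotation_eq_zero hK hne hv h (hg.sub continuous_const)
      ((two_mul π ▸ hper.add_period hper).comp (· - M)) h_mean
      (integral_eq_zero_of_antiperiodic (by fun_prop) fun t => by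
        rw [hper, cos_add_pi, mul_neg])
      (integral_eq_zero_of_antiperiodic (by fun_prop) fun t => by
        rw [hper, sin_add_pi, mul_neg])
  have h_sq : ∫ t in (0 : ℝ)..(2 * π), (g t - M) ^ 2 = 0 := by
    calc ∫ t in (0 : ℝ)..(2 * π), (g t - M) ^ 2
        = ∫ t in (0 : ℝ)..(2 * π), ((g t - M) * g t - (g t - M) * M) := by
          congr! 2 with t
          ring
      _ = 0 := by
          rw [intervalIntegral.integral_sub (Continuous.intervalIntegrable (by fun_prop) _ _)
            (Continuous.intervalIntegrable (by fun_prop) _ _), h_orth,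
            intervalIntegral.integral_mul_const, h_mean, zero_mul, sub_zero]
  by_contra hvM
  refine h_sq.not_gt (intervalIntegral.integral_pos two_pi_pos (by fun_prop)
    (fun t _ => sq_nonneg _) ⟨0, left_mem_Icc.2 two_pi_pos.le, ?_⟩)
  simpa [g, expRotation_zero_apply, sq_pos_iff, sub_eq_zero] using hvM

end EqualityCase

section ClosedBall

variable {n : ℕ} {r : ℝ} {z u : ℝ → E n}

theorem meanWidth_closedBall [NeZero n] (hr : 0 ≤ r) : meanWidth n (closedBall 0 r) = r := by
  simp [meanWidth, suppFn_closedBall hr]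

theorem exists_inE (n : ℕ) [NeZero n] : ∃ z u : ℝ → E n, InE n 2 z u := by
  have : NeZero (2 * n) := ⟨mul_ne_zero two_ne_zero (NeZero.ne n)⟩
  obtain ⟨v, hv⟩ := exists_norm_eq (E n) (inv_nonneg.2 (sqrt_nonneg π))
  obtain ⟨z, hz⟩ := exists_inE_of_loopAction_eq_one
    (continuous_expRotation_apply (standardJ n) v) (expRotation_periodic _ v)
    (by simp [integral_expRotation]) (by
      rw [(isOrthogonalComplexStructure_standardJ n).loopAction_expRotation, hv, inv_pow,
        sq_sqrt pi_pos.le, mul_inv_cancel₀ pi_ne_zero])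
  exact ⟨z, _, hz⟩

theorem InE.two_mul_sqrt_pi_le_integral_norm (h : InE n 2 z u) :
    2 * √π ≤ ∫ t in (0 : ℝ)..(2 * π), ‖u t‖ := by
  have hJ := isOrthogonalComplexStructure_standardJ n
  have hiso := integral_inner_primitive_le_sq_integral_norm two_pi_pos (standardJ n) h.2.1
    h.integral_velocity_eq_zero
  have hact := h.loopAction_eq_one
  have hL : 0 ≤ ∫ t in (0 : ℝ)..(2 * π), ‖u t‖ :=
    integral_nonneg two_pi_pos.le fun t _ => norm_nonneg _
  set L := ∫ t in (0 : ℝ)..(2 * π), ‖u t‖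
  have hsq : 2 ≤ L ^ 2 / (2 * π) :=
    calc 2 = 2 * loopAction (standardJ n) u := by rw [hact, mul_one]
      _ ≤ ‖standardJ n‖ * L ^ 2 / (2 * π) := by rw [loopAction]; linarith
      _ ≤ L ^ 2 / (2 * π) := by
        gcongr
        exact mul_le_of_le_one_left (sq_nonneg L) hJ.opNorm_le_one
  rw [le_div_iff₀ two_pi_pos] at hsq
  refine le_of_sq_le_sq ?_ hL
  rw [mul_pow, sq_sqrt pi_pos.le]
  linarith

theorem le_minLoopWidth_closedBall_mul_sqrt_pi [NeZero n] (hr : 0 ≤ r) :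
    r ≤ minLoopWidth n (closedBall 0 r) * √π := by
  have hπ : 0 < √π := sqrt_pos.2 pi_pos
  obtain ⟨z, u, h⟩ := exists_inE n
  rw [← div_le_iff₀ hπ]
  refine le_csInf ⟨_, z, u, h, rfl⟩ ?_
  rintro _ ⟨z, u, h, rfl⟩
  simp only [suppFn_closedBall hr, intervalIntegral.integral_const_mul]
  calc r / √π = 1 / (2 * π) * (r * (2 * √π)) := by
        field_simp
        rw [sq_sqrt pi_pos.le]
    _ ≤ 1 / (2 * π) * (r * ∫ t in (0 : ℝ)..(2 * π), ‖u t‖) := by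
        gcongr
        exact h.two_mul_sqrt_pi_le_integral_norm

end ClosedBall

section Capacity

variable {n : ℕ} {K : Set (E n)}

theorem eq_of_nonempty_of_subsingleton {X : Type*} [Subsingleton X] {s t : Set X}
    (hs : s.Nonempty) (ht : t.Nonempty) : s = t :=
  (Subsingleton.eq_univ_of_nonempty hs).trans (Subsingleton.eq_univ_of_nonempty ht).symm

theorem eq_closedBall_of_minLoopWidth_mul_sqrt_pi_eq [NeZero n] (hK : IsCompact K)
    (hne : K.Nonempty) (hconv : Convex ℝ K) (hsym : K = -K)
    (h : minLoopWidth n K * √π = meanWidth n K) : K = closedBall 0 (meanWidth n K) := by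
  have hM : 0 ≤ meanWidth n K := h ▸ mul_nonneg (minLoopWidth_nonneg hK hne) (sqrt_nonneg π)
  refine eq_closedBall_of_suppFn_eq hK hconv hne hM (suppFn_eq_mul_norm fun v hv => ?_)
  have hcircle := circleMean_eq_meanWidth hK hne h hv
  rw [suppFn_eq_circleMean hK hne hsym hv (h.trans hcircle.symm), hcircle]

theorem minLoopWidth_mul_sqrt_pi_eq_meanWidth_iff (hK : IsCompact K) (hne : K.Nonempty)
    (hconv : Convex ℝ K) (hsym : K = -K) :
    minLoopWidth n K * √π = meanWidth n K ↔ ∃ r : ℝ, 0 ≤ r ∧ K = closedBall 0 r := by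
  rcases eq_zero_or_neZero n with rfl | _
  · have : IsEmpty (Fin (2 * 0)) := Fin.isEmpty
    simp only [minLoopWidth_zero, meanWidth_zero, zero_mul, true_iff]
    exact ⟨0, le_rfl, eq_of_nonempty_of_subsingleton hne (nonempty_closedBall.2 le_rfl)⟩
  · constructor
    · exact fun h => ⟨_, h ▸ mul_nonneg (minLoopWidth_nonneg hK hne) (sqrt_nonneg π),
        eq_closedBall_of_minLoopWidth_mul_sqrt_pi_eq hK hne hconv hsym h⟩
    · rintro ⟨r, hr, rfl⟩
      refine (minLoopWidth_mul_sqrt_pi_le_meanWidth hK hne).antisymm ?_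
      rw [meanWidth_closedBall hr]
      exact le_minLoopWidth_closedBall_mul_sqrt_pi hr

theorem exists_pos_eq_closedBall_iff {V : Type*} [NormedAddCommGroup V] [NormedSpace ℝ V]
    {s : Set V} (hs : (interior s).Nonempty) :
    (∃ r : ℝ, 0 < r ∧ s = closedBall 0 r) ↔ ∃ r : ℝ, 0 ≤ r ∧ s = closedBall 0 r := by
  refine ⟨fun ⟨r, hr, h⟩ => ⟨r, hr.le, h⟩, ?_⟩
  rintro ⟨r, hr, rfl⟩
  rcases hr.lt_or_eq with hr | rfl
  · exact ⟨r, hr, rfl⟩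
  rcases subsingleton_or_nontrivial V with _ | _
  · exact ⟨1, one_pos, eq_of_nonempty_of_subsingleton
      (nonempty_closedBall.2 le_rfl) (nonempty_closedBall.2 zero_le_one)⟩
  · simp [interior_singleton] at hs

theorem capacity_le_pi_meanWidth_sq_general (hK : IsCompact K) (hne : K.Nonempty) :
    capacity n K ≤ π * meanWidth n K ^ 2 ∧ (Convex ℝ K → K = -K →
      (capacity n K = π * meanWidth n K ^ 2 ↔ ∃ r : ℝ, 0 ≤ r ∧ K = closedBall 0 r)) := by
  have h_nonneg : 0 ≤ minLoopWidth n K * √π :=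
    mul_nonneg (minLoopWidth_nonneg hK hne) (sqrt_nonneg π)
  have h_le := minLoopWidth_mul_sqrt_pi_le_meanWidth hK hne
  rw [capacity_eq_pi_mul_sq]
  refine ⟨by gcongr, fun hconv hsym => ?_⟩
  rw [mul_right_inj' pi_ne_zero, sq_eq_sq₀ h_nonneg (h_nonneg.trans h_le),
    minLoopWidth_mul_sqrt_pi_eq_meanWidth_iff hK hne hconv hsym]

end Capacity

/-- For every centrally symmetric convex body `K ⊂ ℝ^{2n}`, `c(K) ≤ π·(M*(K))²`, with
equality iff `K` is a Euclidean ball centered at the origin. -/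
theorem capacity_le_pi_meanWidth_sq (n : ℕ) (K : Set (E n))
    (hK : IsConvexBody n K) (hsym : K = -K) :
    capacity n K ≤ π * meanWidth n K ^ 2 ∧
    (capacity n K = π * meanWidth n K ^ 2 ↔
      ∃ r : ℝ, 0 < r ∧ K = Metric.closedBall (0 : E n) r) := by
  obtain ⟨hcompact, hconv, hint⟩ := hK
  have h := capacity_le_pi_meanWidth_sq_general hcompact (hint.mono interior_subset)
  exact ⟨h.1, (h.2 hconv hsym).trans (exists_pos_eq_closedBall_iff hint).symm⟩
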